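/- arXiv:astro-ph/0401293 — 3 statements merged into one kernel-verified Lean document; each statement's English description precedes it below -/
import Mathlib

section
/- Let E be a finite-dimensional real inner product space, let k ≥ 2 be a natural number, and let V : E → ℝ be twice continuously differentiable with gradient ∇V satisfying the homogeneity relation ∇V(s • x) = s^(k-1) • ∇V(x) for all s > 0 and x ∈ E. If C ∈ E satisfies ∇V(C) = C, then the Hessian of V at C, viewed as the (Fréchet) derivative of ∇V at C, maps C to (k−1) • C; i.e., C is an eigenvector of the Hessian V''(C) with eigenvalue k−1. -/
open Filter Topology

theorem fderiv_apply_self_of_eventually_smul {𝕜 E F : Type*} [NontriviallyNormedField 𝕜]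
    [NormedAddCommGroup E] [NormedSpace 𝕜 E] [NormedAddCommGroup F] [NormedSpace 𝕜 F]
    {f : E → F} {x : E} {φ : 𝕜 → 𝕜} {a : 𝕜} (hf : DifferentiableAt 𝕜 f x)
    (hφ : HasDerivAt φ a 1) (hhom : ∀ᶠ s in 𝓝 1, f (s • x) = φ s • f x) :
    fderiv 𝕜 f x x = a • f x := by
  have hray : HasDerivAt (fun s : 𝕜 ↦ s • x) x 1 := by
    simpa using (hasDerivAt_id (1 : 𝕜)).smul_const x
  have hf_ray : HasDerivAt (fun s : 𝕜 ↦ f (s • x)) (fderiv 𝕜 f x x) 1 :=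
    hf.hasFDerivAt.comp_hasDerivAt_of_eq 1 hray (one_smul 𝕜 x).symm
  exact hf_ray.unique ((hφ.smul_const (f x)).congr_of_eventuallyEq hhom)

theorem fderiv_apply_self_of_eventually_rpow_smul {E F : Type*}
    [NormedAddCommGroup E] [NormedSpace ℝ E] [NormedAddCommGroup F] [NormedSpace ℝ F]
    {f : E → F} {x : E} {p : ℝ} (hf : DifferentiableAt ℝ f x)
    (hhom : ∀ᶠ s : ℝ in 𝓝 1, f (s • x) = s ^ p • f x) :
    fderiv ℝ f x x = p • f x := by
  have hpow : HasDerivAt (fun s : ℝ ↦ s ^ p) p 1 := by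
    simpa using Real.hasDerivAt_rpow_const (p := p) (Or.inl one_ne_zero)
  exact fderiv_apply_self_of_eventually_smul hf hpow hhom

section Gradient

variable {E : Type*} [NormedAddCommGroup E] [InnerProductSpace ℝ E] [CompleteSpace E]

theorem contDiffAt_gradient {f : E → ℝ} {x : E} {m n : WithTop ℕ∞}
    (hf : ContDiffAt ℝ n f x) (hmn : m + 1 ≤ n) : ContDiffAt ℝ m (gradient f) x :=
  (InnerProductSpace.toDual ℝ E).symm.contDiff.contDiffAt.comp x (hf.fderiv_right hmn)

theorem hessian_eigenvalue_at_straight_line_point_general {k : ℝ} {V : E → ℝ} {C : E}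
    (hV : DifferentiableAt ℝ (gradient V) C)
    (hhom : ∀ᶠ s : ℝ in 𝓝 1, gradient V (s • C) = s ^ (k - 1) • gradient V C)
    (hC : gradient V C = C) :
    fderiv ℝ (gradient V) C C = (k - 1) • C := by
  simpa only [hC] using fderiv_apply_self_of_eventually_rpow_smul hV hhom

end Gradient

/-- **Yoshida's eigenvalue lemma.** If `V : E → ℝ` is `C²` on a finite-dimensional real
inner product space, its gradient is homogeneous of degree `k - 1` under positive scalings,
and `C` satisfies `∇V(C) = C`, then the Hessian of `V` at `C` (the Fréchet derivative of
the gradient map at `C`) maps `C` to `(k - 1) • C`. -/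
theorem hessian_eigenvalue_at_straight_line_point
    {E : Type*} [NormedAddCommGroup E] [InnerProductSpace ℝ E] [FiniteDimensional ℝ E]
    (k : ℕ) (hk : 2 ≤ k) (V : E → ℝ) (hV : ContDiff ℝ 2 V)
    (hhom : ∀ s : ℝ, 0 < s → ∀ x : E, gradient V (s • x) = s ^ (k - 1) • gradient V x)
    (C : E) (hC : gradient V C = C) :
    fderiv ℝ (gradient V) C C = ((k : ℝ) - 1) • C := by
  have hdiff : DifferentiableAt ℝ (gradient V) C :=
    (contDiffAt_gradient hV.contDiffAt one_add_one_eq_two.le).differentiableAt one_ne_zero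
  refine hessian_eigenvalue_at_straight_line_point_general hdiff ?_ hC
  filter_upwards [eventually_gt_nhds one_pos] with s hs
  rw [← Nat.cast_pred (by lia), Real.rpow_natCast, hhom s hs]
end

section
/- Let Λ̄ > 0, λ̄ > 0, μ ∈ ℝ with Λ̄λ̄ − μ² ≠ 0, (λ̄ + μ)/(Λ̄λ̄ − μ²) > 0, (Λ̄ + μ)/(Λ̄λ̄ − μ²) > 0, and define V : ℝ² → ℝ by V(q₁,q₂) = (1/2)[(Λ̄/2)q₁⁴ + (λ̄/2)q₂⁴ − μ q₁² q₂²]. Let z₃ = (c₁, c₂) with c₁ = √((λ̄ + μ)/(Λ̄λ̄ − μ²)), c₂ = √((Λ̄ + μ)/(Λ̄λ̄ − μ²)). Then the trace of the Hessian of V at z₃ equals 6 + 2μ(Λ̄ + λ̄ + 2μ)/(Λ̄λ̄ − μ²); equivalently, the integrability index λ₃ = tr V''(z₃) − 3 equals 3 + 2μ(Λ̄ + λ̄ + 2μ)/(Λ̄λ̄ − μ²). -/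
/-- The phantom-cosmology potential `V(q₁,q₂) = ½[(Λ̄/2)q₁⁴ + (λ̄/2)q₂⁴ − μ q₁²q₂²]`. -/
noncomputable def phantomV (L l m : ℝ) (q : ℝ × ℝ) : ℝ :=
  (1 / 2) * ((L / 2) * q.1 ^ 4 + (l / 2) * q.2 ^ 4 - m * q.1 ^ 2 * q.2 ^ 2)

/-- The gradient `∇V = (∂V/∂q₁, ∂V/∂q₂)` of the phantom-cosmology potential. -/
noncomputable def phantomGrad (L l m : ℝ) (q : ℝ × ℝ) : ℝ × ℝ :=
  (deriv (fun x => phantomV L l m (x, q.2)) q.1,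
   deriv (fun y => phantomV L l m (q.1, y)) q.2)

/-- The Hessian matrix of second partial derivatives of the phantom-cosmology potential. -/
noncomputable def phantomHess (L l m : ℝ) (q : ℝ × ℝ) : Matrix (Fin 2) (Fin 2) ℝ :=
  !![deriv (fun x => (phantomGrad L l m (x, q.2)).1) q.1,
     deriv (fun y => (phantomGrad L l m (q.1, y)).1) q.2;
     deriv (fun x => (phantomGrad L l m (x, q.2)).2) q.1,
     deriv (fun y => (phantomGrad L l m (q.1, y)).2) q.2]

/-! A point `z` with `∇V(z) = z` and nonzero coordinates satisfies `Λ̄z₁² − μz₂² = 1` and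
`λ̄z₂² − μz₁² = 1`. These relations eliminate `Λ̄` and `λ̄` from the trace of the Hessian, leaving
`6 + 2μ(z₁² + z₂²)`. Solving them for `(z₁², z₂²)` by Cramer's rule gives `z₃`. -/

section Derivatives

theorem hasDerivAt_mul_sq_sub (a b x : ℝ) :
    HasDerivAt (fun t => t * (a * t ^ 2 - b)) (3 * a * x ^ 2 - b) x := by
  have h := (hasDerivAt_id' x).mul (((hasDerivAt_pow 2 x).const_mul a).sub_const b)
  exact h.congr_deriv (by push_cast; ring)

theorem hasDerivAt_mul_sub_mul_sq (a b c x : ℝ) :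
    HasDerivAt (fun t => a * (b - c * t ^ 2)) (-2 * c * a * x) x := by
  have h := (((hasDerivAt_pow 2 x).const_mul c).const_sub b).const_mul a
  exact h.congr_deriv (by push_cast; ring)

variable (L l m : ℝ)

theorem phantomV_swap (q : ℝ × ℝ) : phantomV L l m q.swap = phantomV l L m q := by
  simp only [phantomV, Prod.fst_swap, Prod.snd_swap]
  ring

theorem hasDerivAt_phantomV_fst (x y : ℝ) :
    HasDerivAt (fun t => phantomV L l m (t, y)) (x * (L * x ^ 2 - m * y ^ 2)) x := by
  have h := ((((hasDerivAt_pow 4 x).const_mul (L / 2)).add_const (l / 2 * y ^ 4)).sub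
    (((hasDerivAt_pow 2 x).const_mul m).mul_const (y ^ 2))).const_mul (1 / 2)
  exact h.congr_deriv (by push_cast; ring)

theorem hasDerivAt_phantomV_snd (x y : ℝ) :
    HasDerivAt (fun t => phantomV L l m (x, t)) (y * (l * y ^ 2 - m * x ^ 2)) y :=
  (hasDerivAt_phantomV_fst l L m y x).congr_of_eventuallyEq
    (.of_forall fun t => phantomV_swap L l m (t, x))

theorem phantomGrad_eq (q : ℝ × ℝ) :
    phantomGrad L l m q =
      (q.1 * (L * q.1 ^ 2 - m * q.2 ^ 2), q.2 * (l * q.2 ^ 2 - m * q.1 ^ 2)) :=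
  Prod.ext (hasDerivAt_phantomV_fst L l m q.1 q.2).deriv
    (hasDerivAt_phantomV_snd L l m q.1 q.2).deriv

theorem phantomHess_eq (q : ℝ × ℝ) :
    phantomHess L l m q =
      !![3 * L * q.1 ^ 2 - m * q.2 ^ 2, -2 * m * q.1 * q.2;
         -2 * m * q.2 * q.1, 3 * l * q.2 ^ 2 - m * q.1 ^ 2] := by
  simp only [phantomHess, phantomGrad_eq, (hasDerivAt_mul_sq_sub _ _ _).deriv,
    (hasDerivAt_mul_sub_mul_sq _ _ _ _).deriv]

end Derivatives

section DarbouxPoints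

variable {L l m : ℝ}

theorem phantomGrad_eq_self_iff {z : ℝ × ℝ} (hz₁ : z.1 ≠ 0) (hz₂ : z.2 ≠ 0) :
    phantomGrad L l m z = z ↔
      L * z.1 ^ 2 - m * z.2 ^ 2 = 1 ∧ l * z.2 ^ 2 - m * z.1 ^ 2 = 1 := by
  rw [phantomGrad_eq, Prod.ext_iff, mul_eq_left₀ hz₁, mul_eq_left₀ hz₂]

theorem trace_phantomHess_of_phantomGrad_eq_self {z : ℝ × ℝ} (hz₁ : z.1 ≠ 0) (hz₂ : z.2 ≠ 0)
    (hz : phantomGrad L l m z = z) :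
    (phantomHess L l m z).trace = 6 + 2 * m * (z.1 ^ 2 + z.2 ^ 2) := by
  obtain ⟨h₁, h₂⟩ := (phantomGrad_eq_self_iff hz₁ hz₂).1 hz
  rw [phantomHess_eq, Matrix.trace_fin_two_of]
  linear_combination 3 * h₁ + 3 * h₂

theorem phantomGrad_eq_self_of_sq_eq (hD : L * l - m ^ 2 ≠ 0) {z : ℝ × ℝ}
    (hz₁ : z.1 ^ 2 = (l + m) / (L * l - m ^ 2)) (hz₂ : z.2 ^ 2 = (L + m) / (L * l - m ^ 2)) :
    phantomGrad L l m z = z := by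
  have h₁ : L * z.1 ^ 2 - m * z.2 ^ 2 = 1 := by
    rw [hz₁, hz₂, ← mul_div_assoc, ← mul_div_assoc, ← sub_div, div_eq_one_iff_eq hD]
    ring
  have h₂ : l * z.2 ^ 2 - m * z.1 ^ 2 = 1 := by
    rw [hz₁, hz₂, ← mul_div_assoc, ← mul_div_assoc, ← sub_div, div_eq_one_iff_eq hD]
    ring
  rw [phantomGrad_eq, h₁, h₂, mul_one, mul_one]

end DarbouxPoints

theorem phantom_hessian_z3_trace_general {L l m : ℝ}
    (h1 : 0 < (l + m) / (L * l - m ^ 2)) (h2 : 0 < (L + m) / (L * l - m ^ 2)) :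
    (phantomHess L l m (√((l + m) / (L * l - m ^ 2)), √((L + m) / (L * l - m ^ 2)))).trace =
      6 + 2 * m * (L + l + 2 * m) / (L * l - m ^ 2) := by
  have hD : L * l - m ^ 2 ≠ 0 := (div_ne_zero_iff.1 h1.ne').2
  have hgrad := phantomGrad_eq_self_of_sq_eq hD
    (z := (√((l + m) / (L * l - m ^ 2)), √((L + m) / (L * l - m ^ 2))))
    (Real.sq_sqrt h1.le) (Real.sq_sqrt h2.le)
  rw [trace_phantomHess_of_phantomGrad_eq_self (Real.sqrt_pos.2 h1).ne' (Real.sqrt_pos.2 h2).ne'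
    hgrad, Real.sq_sqrt h1.le, Real.sq_sqrt h2.le]
  ring

/-- **Trace of the Hessian at `z₃` and the integrability index `λ₃`.** At
`z₃ = (c₁, c₂)` with `c₁ = √((λ̄+μ)/(Λ̄λ̄−μ²))`, `c₂ = √((Λ̄+μ)/(Λ̄λ̄−μ²))`, the trace of the
Hessian equals `6 + 2μ(Λ̄+λ̄+2μ)/(Λ̄λ̄−μ²)`; equivalently, the integrability index
`λ₃ = tr V''(z₃) − 3` equals `3 + 2μ(Λ̄+λ̄+2μ)/(Λ̄λ̄−μ²)`. -/
theorem phantom_hessian_z3_trace (L l m : ℝ) (hL : 0 < L) (hl : 0 < l)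
    (hD : L * l - m ^ 2 ≠ 0)
    (h1 : 0 < (l + m) / (L * l - m ^ 2))
    (h2 : 0 < (L + m) / (L * l - m ^ 2)) :
    (phantomHess L l m (Real.sqrt ((l + m) / (L * l - m ^ 2)),
        Real.sqrt ((L + m) / (L * l - m ^ 2)))).trace =
      6 + 2 * m * (L + l + 2 * m) / (L * l - m ^ 2) ∧
    (phantomHess L l m (Real.sqrt ((l + m) / (L * l - m ^ 2)),
        Real.sqrt ((L + m) / (L * l - m ^ 2)))).trace - 3 =
      3 + 2 * m * (L + l + 2 * m) / (L * l - m ^ 2) := by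
  have htrace := phantom_hessian_z3_trace_general h1 h2
  exact ⟨htrace, by rw [htrace]; ring⟩
end

section
/- Let w, A, B be real constants, let I ⊆ ℝ be an open interval, and let x : I → ℝ be differentiable with x(t) > 0 for all t ∈ I. If (x'(t)/x(t))² = A · x(t)^(−3(1+w)) + B for all t ∈ I, then the function y(t) = 1/x(t) satisfies (y'(t)/y(t))² = A · y(t)^(−3(1+w')) + B for all t ∈ I, where w' = −(2 + w) (i.e., 1 + w' = −(1 + w)). In particular, if x(t) is a solution of the flat Friedmann equation for barotropic index w, then x(t)^(−1) is a solution of the flat Friedmann equation for barotropic index −(w+2). -/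
/-!
Passing from `x` to `x⁻¹` only changes the sign of the logarithmic derivative `x'/x`, so its square
is preserved, and so is the density term: `x ^ p = x⁻¹ ^ (-p)`. For `p = -3 * (1 + w)`, the
exponent `-p` belongs to the index `w'` with `1 + w' = -(1 + w)`.
-/

theorem logDeriv_fun_inv {𝕜 𝕜' : Type*} [NontriviallyNormedField 𝕜] [NontriviallyNormedField 𝕜']
    [NormedAlgebra 𝕜 𝕜'] {f : 𝕜 → 𝕜'} {t : 𝕜} (hf : DifferentiableAt 𝕜 f t) :
    logDeriv (fun s => (f s)⁻¹) t = -logDeriv f t := by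
  simpa using logDeriv_fun_zpow hf (-1)

theorem inv_rpow_neg (x p : ℝ) : x⁻¹ ^ (-p) = x ^ p := by
  rw [Real.rpow_neg_eq_inv_rpow, inv_inv]

/-- The flat Friedmann equation `(x'/x)² = A·x^(−3(1+w)) + B` on `s`, for a fluid with barotropic
index `w` and density parameter `A` and a cosmological constant with density parameter `B`.
Solutions are nonvanishing rather than positive, as `3 * (1 + w)` may be an integer. -/
structure IsFlatFriedmannSolutionOn (w A B : ℝ) (s : Set ℝ) (x : ℝ → ℝ) : Prop where
  differentiableAt : ∀ t ∈ s, DifferentiableAt ℝ x t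
  ne_zero : ∀ t ∈ s, x t ≠ 0
  sq_logDeriv : ∀ t ∈ s, logDeriv x t ^ 2 = A * x t ^ (-3 * (1 + w)) + B

theorem IsFlatFriedmannSolutionOn.inv {w A B : ℝ} {s : Set ℝ} {x : ℝ → ℝ}
    (h : IsFlatFriedmannSolutionOn w A B s x) :
    IsFlatFriedmannSolutionOn (-(2 + w)) A B s (fun t => (x t)⁻¹) where
  differentiableAt t ht := (h.differentiableAt t ht).fun_inv (h.ne_zero t ht)
  ne_zero t ht := inv_ne_zero (h.ne_zero t ht)
  sq_logDeriv t ht := by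
    have dual_exponent : -3 * (1 + -(2 + w)) = -(-3 * (1 + w)) := by ring
    calc logDeriv (fun t => (x t)⁻¹) t ^ 2
        = logDeriv x t ^ 2 := by rw [logDeriv_fun_inv (h.differentiableAt t ht), neg_sq]
      _ = A * x t ^ (-3 * (1 + w)) + B := h.sq_logDeriv t ht
      _ = A * (x t)⁻¹ ^ (-3 * (1 + -(2 + w))) + B := by rw [dual_exponent, inv_rpow_neg]

theorem friedmann_duality_general {w A B : ℝ} {s : Set ℝ} {x : ℝ → ℝ} :
    IsFlatFriedmannSolutionOn (-(2 + w)) A B s (fun t => (x t)⁻¹) ↔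
      IsFlatFriedmannSolutionOn w A B s x where
  mp h := by
    have dual_index : -(2 + -(2 + w)) = w := by ring
    simpa only [dual_index, inv_inv] using h.inv
  mpr h := h.inv

/-- **Duality of the flat Friedmann equation.** If `x : I → ℝ` is positive and
differentiable on an open interval `I` and satisfies the flat Friedmann first integral
`(x'/x)² = A·x^(−3(1+w)) + B`, then `y = 1/x` satisfies the flat Friedmann first integral
`(y'/y)² = A·y^(−3(1+w')) + B` with the dual barotropic index `w' = −(2+w)`. -/
theorem friedmann_duality (w A B : ℝ) (I : Set ℝ) (hI : IsOpen I) (hI' : I.OrdConnected)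
    (x : ℝ → ℝ) (hx : ∀ t ∈ I, DifferentiableAt ℝ x t) (hpos : ∀ t ∈ I, 0 < x t)
    (hfried : ∀ t ∈ I, (deriv x t / x t) ^ 2 = A * x t ^ (-3 * (1 + w)) + B) :
    ∀ t ∈ I, (deriv (fun s => (x s)⁻¹) t / (x t)⁻¹) ^ 2 =
      A * ((x t)⁻¹) ^ (-3 * (1 + (-(2 + w)))) + B :=
  (friedmann_duality_general.mpr ⟨hx, fun t ht => (hpos t ht).ne', hfried⟩).sq_logDeriv
end
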